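/- arXiv:2209.09945 — 2 statements merged into one kernel-verified Lean document; each statement's English description precedes it below -/
import Mathlib

section
/- Let n = 2N be even, fix m with 1 ≤ m ≤ n, and let P := Y_{m,n−m+1} with I-coloring κ((i,j)) := j − i + m and J-coloring κ̃((i,j)) := the orbit of κ((i,j)) under k ↦ n+1−k. Let p := {N, N+1} ∈ J (the unique orbit not satisfying the orthogonality condition). Then for every order filter F of P, S̃_p(F) = S_N(S_{N+1}(S_N(F))) = S_{N+1}(S_N(S_{N+1}(F))). -/
/-- `F` is an order filter of the poset `α`: upward closed subset. -/
def IsOrderFilter {α : Type*} [PartialOrder α] (F : Set α) : Prop :=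
  ∀ ⦃x y : α⦄, x ∈ F → x ≤ y → y ∈ F

/-- `A_c(F)`: the union of all order filters `F'` with `F' \ F ⊆ κ⁻¹({c})`. -/
def Aop {α C : Type*} [PartialOrder α] (κ : α → C) (c : C) (F : Set α) : Set α :=
  ⋃₀ {F' : Set α | IsOrderFilter F' ∧ F' \ F ⊆ κ ⁻¹' {c}}

/-- `R_c(F)`: the intersection of all order filters `F'` with `F \ F' ⊆ κ⁻¹({c})`. -/
def Rop {α C : Type*} [PartialOrder α] (κ : α → C) (c : C) (F : Set α) : Set α :=
  ⋂₀ {F' : Set α | IsOrderFilter F' ∧ F \ F' ⊆ κ ⁻¹' {c}}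

open Classical in
/-- `S_c(F) := (A_c(F) \ F) ∪ R_c(F)` if this is an order filter, and `F` otherwise. -/
noncomputable def Sop {α C : Type*} [PartialOrder α] (κ : α → C) (c : C) (F : Set α) : Set α :=
  if IsOrderFilter ((Aop κ c F \ F) ∪ Rop κ c F) then (Aop κ c F \ F) ∪ Rop κ c F else F

/-- The rectangular Young diagram poset `Y_{m,N}` (cells `(i,j)`, `1 ≤ i ≤ m`,
`1 ≤ j ≤ N`, with `(i₁,j₁) ≤ (i₂,j₂)` iff `i₁ ≥ i₂` and `j₁ ≥ j₂`), realized as the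
product of two dual finite chains. -/
abbrev YD (m N : ℕ) := (Fin m)ᵒᵈ × (Fin N)ᵒᵈ

/-- The `I`-coloring of `Y_{m, n−m+1}` for type `A_n`: `κ((i,j)) = j − i + m`
(in 1-indexed coordinates), with values in `{1,…,n}`. -/
def ykappa (m N : ℕ) (x : YD m N) : ℤ :=
  ((OrderDual.ofDual x.2 : Fin N) : ℤ) - ((OrderDual.ofDual x.1 : Fin m) : ℤ) + m

/-- The `J`-coloring of `Y_{m, n−m+1}`: the orbit of the color `κ((i,j)) = j − i + m`
under the Dynkin diagram involution `k ↦ n+1−k`, encoded by its minimal element, i.e.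
`κ̃((i,j)) = min{ j−i+m , i−j+n−m+1 }`. -/
def ytkappa (n m N : ℕ) (x : YD m N) : ℤ :=
  min (ykappa m N x) ((n : ℤ) + 1 - ykappa m N x)

def rowZ {m K : ℕ} (p : YD m K) : ℤ := ((OrderDual.ofDual p.1 : Fin m) : ℤ)
def colZ {m K : ℕ} (p : YD m K) : ℤ := ((OrderDual.ofDual p.2 : Fin K) : ℤ)

lemma yk_eq {m K : ℕ} (p : YD m K) : ykappa m K p = colZ p - rowZ p + m := rfl

lemma row_nn {m K : ℕ} (p : YD m K) : 0 ≤ rowZ p ∧ rowZ p < m ∧ 0 ≤ colZ p ∧ colZ p < K := by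
  obtain ⟨a, b⟩ := p
  have h1 := (OrderDual.ofDual a).isLt
  have h2 := (OrderDual.ofDual b).isLt
  simp only [rowZ, colZ]
  omega

lemma le_iff_rc {m K : ℕ} (p q : YD m K) : p ≤ q ↔ rowZ q ≤ rowZ p ∧ colZ q ≤ colZ p := by
  simp only [rowZ, colZ, Prod.le_def, Nat.cast_le, Fin.val_fin_le, OrderDual.ofDual_le_ofDual]

lemma exists_cell {m K : ℕ} (i j : ℤ) (hi : 0 ≤ i) (him : i < m) (hj : 0 ≤ j) (hjK : j < K) :
    ∃ q : YD m K, rowZ q = i ∧ colZ q = j := by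
  refine ⟨(OrderDual.toDual ⟨i.toNat, by omega⟩, OrderDual.toDual ⟨j.toNat, by omega⟩), ?_, ?_⟩
  · simp [rowZ, hi]
  · simp [colZ, hj]

lemma mem_Aop_iff {α C : Type*} [PartialOrder α] (κ : α → C) (c : C) (F : Set α) (p : α) :
    p ∈ Aop κ c F ↔ ∀ q, p ≤ q → q ∈ F ∨ κ q = c := by
  constructor
  · rintro ⟨F', ⟨h1, h2⟩, hp⟩ q hq
    by_cases hqF : q ∈ F
    · exact Or.inl hqF
    · exact Or.inr (h2 ⟨h1 hp hq, hqF⟩)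
  · intro h
    refine ⟨{q | p ≤ q}, ⟨fun x y hx hxy => le_trans hx hxy, ?_⟩, le_refl p⟩
    rintro q ⟨hq, hqF⟩
    exact (h q hq).resolve_left hqF

lemma mem_Rop_iff {α C : Type*} [PartialOrder α] (κ : α → C) (c : C) (F : Set α) (p : α) :
    p ∈ Rop κ c F ↔ ∃ q, q ≤ p ∧ q ∈ F ∧ κ q ≠ c := by
  constructor
  · intro h
    by_contra hne
    push Not at hne
    refine h {q | ¬ q ≤ p} ⟨fun x y hx hxy hy => hx (le_trans hxy hy), ?_⟩ (le_refl p)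
    rintro q ⟨hq, hqF⟩
    exact hne q (not_not.mp hqF) hq
  · rintro ⟨q, hqp, hqF, hc⟩ F' ⟨h1, h2⟩
    by_contra hp
    exact hc (h2 ⟨hqF, fun hq => hp (h1 hq hqp)⟩)

def Fof (m K : ℕ) (t : ℤ → ℤ) : Set (YD m K) := {p | rowZ p < t (ykappa m K p)}

lemma mem_Fof {m K : ℕ} {t : ℤ → ℤ} (p : YD m K) :
    p ∈ Fof m K t ↔ rowZ p < t (ykappa m K p) := Iff.rfl

def Valid (m K : ℕ) (t : ℤ → ℤ) : Prop :=
  t 0 = m ∧ t (m + K) = 0 ∧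
    ∀ c : ℤ, 0 ≤ c → c < m + K → t (c + 1) ≤ t c ∧ t c ≤ t (c + 1) + 1

lemma Valid.lip {m K : ℕ} {t : ℤ → ℤ} (ht : Valid m K t) (c d : ℤ) (hc : 0 ≤ c) (hcd : c ≤ d)
    (hd : d ≤ m + K) : t d ≤ t c ∧ t c ≤ t d + (d - c) := by
  induction d, hcd using Int.leInduction with
  | base => omega
  | succ d h ih =>
    have := ih (by omega)
    have := ht.2.2 d (by omega) (by omega)
    omega

lemma Valid.filter {m K : ℕ} {t : ℤ → ℤ} (ht : Valid m K t) : IsOrderFilter (Fof m K t) := by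
  intro p q hp hpq
  rw [le_iff_rc] at hpq
  rw [mem_Fof, yk_eq] at *
  have hp' := row_nn p
  have hq' := row_nn q
  have h1 := ht.lip (colZ q - rowZ p + m) (colZ p - rowZ p + m) (by omega) (by omega) (by omega)
  have h2 := ht.lip (colZ q - rowZ p + m) (colZ q - rowZ q + m) (by omega) (by omega) (by omega)
  omega

lemma mem_A {m K : ℕ} {t : ℤ → ℤ} (ht : Valid m K t) (κ : YD m K → ℤ) (c l u : ℤ)
    (hl : 1 ≤ l) (hlu : l ≤ u) (hu : u < m + K)
    (hκ : ∀ p, κ p = c ↔ l ≤ ykappa m K p ∧ ykappa m K p ≤ u) (p : YD m K) :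
    p ∈ Aop κ c (Fof m K t) ↔ p ∈ Fof m K t ∨ ((l ≤ ykappa m K p ∧ ykappa m K p ≤ u) ∧
      rowZ p < t (l - 1) ∧ rowZ p - (u + 1 - ykappa m K p) < t (u + 1)) := by
  have hp := row_nn p
  have hy := yk_eq p
  rw [mem_Aop_iff]
  constructor
  · intro h
    rcases h p (le_refl p) with h0 | h0
    · exact Or.inl h0
    rw [hκ] at h0
    refine Or.inr ⟨h0, ?_, ?_⟩
    · by_cases hb : 0 ≤ colZ p - (ykappa m K p - l + 1)
      · obtain ⟨q, hq1, hq2⟩ := exists_cell (m := m) (K := K) (rowZ p)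
          (colZ p - (ykappa m K p - l + 1)) (by omega) (by omega) hb (by omega)
        have hyq := yk_eq q
        rcases h q (by rw [le_iff_rc]; omega) with h3 | h3
        · rw [mem_Fof, show ykappa m K q = l - 1 by omega] at h3
          omega
        · rw [hκ] at h3
          omega
      · have h4 := ht.lip 0 (l - 1) (by omega) (by omega) (by omega)
        have := ht.1
        omega
    · by_cases hb : 0 ≤ rowZ p - (u + 1 - ykappa m K p)
      · obtain ⟨q, hq1, hq2⟩ := exists_cell (m := m) (K := K) (rowZ p - (u + 1 - ykappa m K p))
          (colZ p) (by omega) (by omega) (by omega) (by omega)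
        have hyq := yk_eq q
        rcases h q (by rw [le_iff_rc]; omega) with h3 | h3
        · rw [mem_Fof, show ykappa m K q = u + 1 by omega] at h3
          omega
        · rw [hκ] at h3
          omega
      · have h4 := ht.lip (u + 1) (m + K) (by omega) (by omega) (by omega)
        have := ht.2.1
        omega
  · rintro (h | ⟨h0, h1, h2⟩) q hq
    · exact Or.inl (ht.filter h hq)
    · rw [hκ, mem_Fof]
      rw [le_iff_rc] at hq
      have hq' := row_nn q
      have hyq := yk_eq q
      by_cases hc1 : ykappa m K q < l
      · left
        have := ht.lip (ykappa m K q) (l - 1) (by omega) (by omega) (by omega)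
        omega
      · by_cases hc2 : u < ykappa m K q
        · left
          have := ht.lip (u + 1) (ykappa m K q) (by omega) (by omega) (by omega)
          omega
        · right; omega

lemma mem_R {m K : ℕ} {t : ℤ → ℤ} (ht : Valid m K t) (κ : YD m K → ℤ) (c l u : ℤ)
    (hl : 1 ≤ l) (hlu : l ≤ u) (hu : u < m + K)
    (hκ : ∀ p, κ p = c ↔ l ≤ ykappa m K p ∧ ykappa m K p ≤ u) (p : YD m K) :
    p ∈ Rop κ c (Fof m K t) ↔ p ∈ Fof m K t ∧ ¬ ((l ≤ ykappa m K p ∧ ykappa m K p ≤ u) ∧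
      t (l - 1) ≤ rowZ p + (ykappa m K p - l + 1) ∧ t (u + 1) ≤ rowZ p) := by
  have hp := row_nn p
  have hy := yk_eq p
  rw [mem_Rop_iff]
  constructor
  · rintro ⟨q, hqp, hqF, hqc⟩
    refine ⟨ht.filter hqF hqp, ?_⟩
    rintro ⟨h0, h1, h2⟩
    rw [Ne, hκ] at hqc
    rw [le_iff_rc] at hqp
    rw [mem_Fof] at hqF
    have hq' := row_nn q
    have hyq := yk_eq q
    by_cases hc1 : ykappa m K q < l
    · have := ht.lip (ykappa m K q) (l - 1) (by omega) (by omega) (by omega)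
      omega
    · have := ht.lip (u + 1) (ykappa m K q) (by omega) (by omega) (by omega)
      omega
  · rintro ⟨hF, hn⟩
    by_cases h0 : l ≤ ykappa m K p ∧ ykappa m K p ≤ u
    · by_cases h1 : t (l - 1) ≤ rowZ p + (ykappa m K p - l + 1)
      · have h2 : ¬ t (u + 1) ≤ rowZ p := fun h => hn ⟨h0, h1, h⟩
        have h4 := ht.lip (u + 1) (m + K) (by omega) (by omega) (by omega)
        have := ht.2.1
        obtain ⟨q, hq1, hq2⟩ := exists_cell (m := m) (K := K) (rowZ p)
          (colZ p + (u + 1 - ykappa m K p)) (by omega) (by omega) (by omega) (by omega)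
        have hyq := yk_eq q
        refine ⟨q, by rw [le_iff_rc]; omega, ?_, by rw [Ne, hκ]; omega⟩
        rw [mem_Fof, show ykappa m K q = u + 1 by omega]
        omega
      · have h4 := ht.lip 0 (l - 1) (by omega) (by omega) (by omega)
        have := ht.1
        obtain ⟨q, hq1, hq2⟩ := exists_cell (m := m) (K := K)
          (rowZ p + (ykappa m K p - l + 1)) (colZ p) (by omega) (by omega) (by omega) (by omega)
        have hyq := yk_eq q
        refine ⟨q, by rw [le_iff_rc]; omega, ?_, by rw [Ne, hκ]; omega⟩
        rw [mem_Fof, show ykappa m K q = l - 1 by omega]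
        omega
    · exact ⟨p, le_refl p, hF, by rw [Ne, hκ]; exact h0⟩

lemma Sop_of_eq {α C : Type*} [PartialOrder α] (κ : α → C) (c : C) (F G : Set α)
    (hG : IsOrderFilter G) (h : (Aop κ c F \ F) ∪ Rop κ c F = G) : Sop κ c F = G := by
  unfold Sop
  rw [h, if_pos hG]

def refl1 (t : ℤ → ℤ) (c : ℤ) : ℤ → ℤ := fun k => if k = c then t (c - 1) + t (c + 1) - t c else t k

lemma Valid.refl1 {m K : ℕ} {t : ℤ → ℤ} (ht : Valid m K t) (c : ℤ) (hc : 1 ≤ c)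
    (hc' : c < m + K) : Valid m K (refl1 t c) := by
  obtain ⟨h0, h1, h2⟩ := ht
  have e1 := h2 (c - 1) (by omega) (by omega)
  have e2 := h2 c (by omega) (by omega)
  rw [sub_add_cancel] at e1
  refine ⟨?_, ?_, ?_⟩
  · simp only [_root_.refl1]; rw [if_neg (by omega)]; exact h0
  · simp only [_root_.refl1]; rw [if_neg (by omega)]; exact h1
  · intro k hk hk'
    have e3 := h2 k hk hk'
    simp only [_root_.refl1]
    by_cases a : k = c
    · subst a
      rw [if_pos rfl, if_neg (by omega)]
      omega
    · by_cases b : k + 1 = c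
      · subst b
        rw [if_pos rfl, if_neg a, show k + 1 - 1 = k by omega] at *
        omega
      · rw [if_neg a, if_neg b]
        exact e3

lemma Sop_single {m K : ℕ} {t : ℤ → ℤ} (ht : Valid m K t) (c : ℤ) (hc : 1 ≤ c)
    (hc' : c < m + K) : Sop (ykappa m K) c (Fof m K t) = Fof m K (refl1 t c) := by
  apply Sop_of_eq _ _ _ _ (ht.refl1 c hc hc').filter
  ext p
  have hκ : ∀ p, ykappa m K p = c ↔ c ≤ ykappa m K p ∧ ykappa m K p ≤ c := by
    intro p; omega
  rw [Set.mem_union, Set.mem_sdiff, mem_A ht _ c c c hc le_rfl hc' hκ,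
    mem_R ht _ c c c hc le_rfl hc' hκ, mem_Fof, mem_Fof]
  have e1 := ht.2.2 (c - 1) (by omega) (by omega)
  have e2 := ht.2.2 c (by omega) (by omega)
  rw [sub_add_cancel] at e1
  simp only [refl1]
  by_cases h : ykappa m K p = c
  · rw [if_pos h, h]
    omega
  · rw [if_neg h]
    omega

lemma Sop_double {m K : ℕ} {t : ℤ → ℤ} (ht : Valid m K t) (κ : YD m K → ℤ) (c : ℤ) (hc : 1 ≤ c)
    (hc' : c + 1 < m + K)
    (hκ : ∀ p, κ p = c ↔ c ≤ ykappa m K p ∧ ykappa m K p ≤ c + 1) :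
    Sop κ c (Fof m K t) = Fof m K (refl1 (refl1 (refl1 t c) (c + 1)) c) := by
  have hV := ((ht.refl1 c hc (by omega)).refl1 (c + 1) (by omega) hc').refl1 c hc (by omega)
  have key : ∀ k, refl1 (refl1 (refl1 t c) (c + 1)) c k =
      if k = c then t (c - 1) + t (c + 2) - t (c + 1) else
      if k = c + 1 then t (c - 1) + t (c + 2) - t c else t k := by
    intro k
    simp only [refl1]
    rw [show c + 1 + 1 = c + 2 by ring, show c + 1 - 1 = c by ring]
    split_ifs <;> omega
  have e1 := ht.2.2 (c - 1) (by omega) (by omega)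
  have e2 := ht.2.2 c (by omega) (by omega)
  have e3 := ht.2.2 (c + 1) (by omega) (by omega)
  rw [sub_add_cancel] at e1
  rw [show c + 1 + 1 = c + 2 by ring] at e3
  have hmem : ∀ p, p ∈ (Aop κ c (Fof m K t) \ Fof m K t) ∪ Rop κ c (Fof m K t) ↔
      ((rowZ p < t (ykappa m K p) ∨ ((c ≤ ykappa m K p ∧ ykappa m K p ≤ c + 1) ∧
        rowZ p < t (c - 1) ∧ rowZ p - (c + 2 - ykappa m K p) < t (c + 2))) ∧
        ¬ rowZ p < t (ykappa m K p)) ∨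
      (rowZ p < t (ykappa m K p) ∧ ¬ ((c ≤ ykappa m K p ∧ ykappa m K p ≤ c + 1) ∧
        t (c - 1) ≤ rowZ p + (ykappa m K p - c + 1) ∧ t (c + 2) ≤ rowZ p)) := by
    intro p
    rw [Set.mem_union, Set.mem_sdiff, mem_A ht κ c c (c + 1) hc (by omega) hc' hκ,
      mem_R ht κ c c (c + 1) hc (by omega) hc' hκ, mem_Fof,
      show c + 1 + 1 = c + 2 by ring]
  by_cases hpal : t (c - 1) + t (c + 2) = t c + t (c + 1) ∧
      t (c - 1) - t c ≠ t c - t (c + 1)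
  · have hEq : refl1 (refl1 (refl1 t c) (c + 1)) c = t := by
      funext k
      rw [key]
      split_ifs with a b
      · subst a; omega
      · subst b; omega
      · rfl
    rw [hEq]
    unfold Sop
    rw [if_neg]
    intro hfil
    have b0 := ht.lip 0 (c - 1) (by omega) (by omega) (by omega)
    have b1 := ht.lip (c + 2) (m + K) (by omega) (by omega) (by omega)
    have b2 := ht.1
    have b3 := ht.2.1
    by_cases hd : t (c - 1) = t c
    · obtain ⟨p, hp1, hp2⟩ := exists_cell (m := m) (K := K) (t c - 1) (t c + c - m)
        (by omega) (by omega) (by omega) (by omega)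
      obtain ⟨q, hq1, hq2⟩ := exists_cell (m := m) (K := K) (t c - 1) (t c - 1 + c - m)
        (by omega) (by omega) (by omega) (by omega)
      have yp := yk_eq p
      have yq := yk_eq q
      have h1 := (hmem p).2 (by rw [show ykappa m K p = c + 1 by omega]; omega)
      have h2 := (hmem q).1 (hfil h1 (by rw [le_iff_rc]; omega))
      rw [show ykappa m K q = c by omega] at h2
      omega
    · obtain ⟨p, hp1, hp2⟩ := exists_cell (m := m) (K := K) (t c) (t c + c - m)
        (by omega) (by omega) (by omega) (by omega)
      obtain ⟨q, hq1, hq2⟩ := exists_cell (m := m) (K := K) (t c - 1) (t c + c - m)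
        (by omega) (by omega) (by omega) (by omega)
      have yp := yk_eq p
      have yq := yk_eq q
      have h1 := (hmem p).2 (by rw [show ykappa m K p = c by omega]; omega)
      have h2 := (hmem q).1 (hfil h1 (by rw [le_iff_rc]; omega))
      rw [show ykappa m K q = c + 1 by omega] at h2
      omega
  · apply Sop_of_eq _ _ _ _ hV.filter
    ext p
    rw [hmem, mem_Fof, key]
    by_cases h : ykappa m K p = c
    · rw [if_pos h, h]
      omega
    · by_cases h' : ykappa m K p = c + 1
      · rw [if_neg h, if_pos h', h']
        omega
      · rw [if_neg h, if_neg h']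
        omega

lemma exists_threshold (G : ℤ → Prop) (hG : ∀ i, G (i + 1) → G i) (M : ℕ) (h0 : G (-1))
    (hM : ¬ G M) : ∃ s : ℤ, ∀ i, G i ↔ i < s := by
  have mono : ∀ i j, i ≤ j → G j → G i := by
    intro i j hij
    induction j, hij using Int.leInduction with
    | base => exact id
    | succ j _ ih => exact fun h => ih (hG _ h)
  obtain ⟨s, hs, hs'⟩ := Int.exists_greatest_of_bdd (P := G)
    ⟨M, fun z hz => by
      by_contra hlt
      exact hM (mono _ _ (by omega) hz)⟩ ⟨-1, h0⟩
  refine ⟨s + 1, fun i => ⟨fun h => ?_, fun h => mono i s (by omega) hs⟩⟩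
  have := hs' i h
  omega

lemma exists_valid {m K : ℕ} (F : Set (YD m K)) (hF : IsOrderFilter F) :
    ∃ t, Valid m K t ∧ F = Fof m K t := by
  let G : ℤ → ℤ → Prop := fun i j => i < 0 ∨ j < 0 ∨ ∃ q ∈ F, rowZ q = i ∧ colZ q = j
  have hG1 : ∀ i j i' j', G i j → i' ≤ i → j' ≤ j → G i' j' := by
    intro i j i' j' h hi hj
    by_cases a : i' < 0
    · exact Or.inl a
    by_cases b : j' < 0
    · exact Or.inr (Or.inl b)
    rcases h with h | h | ⟨q, hq, h1, h2⟩
    · omega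
    · omega
    · have := row_nn q
      obtain ⟨r, hr1, hr2⟩ := exists_cell (m := m) (K := K) i' j' (by omega) (by omega)
        (by omega) (by omega)
      exact Or.inr (Or.inr ⟨r, hF hq (by rw [le_iff_rc]; omega), hr1, hr2⟩)
  have hGm : ∀ i j, 0 ≤ i → 0 ≤ j → G i j → i < m ∧ j < K := by
    rintro i j hi hj (h | h | ⟨q, hq, h1, h2⟩)
    · omega
    · omega
    · have := row_nn q
      omega
  have hex : ∀ c : ℤ, ∃ s : ℤ, 0 ≤ c → ∀ i, G i (i + c - m) ↔ i < s := by
    intro c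
    by_cases hc : 0 ≤ c
    · obtain ⟨s, hs⟩ := exists_threshold (fun i => G i (i + c - m))
        (fun i h => hG1 _ _ _ _ h (by omega) (by omega)) m (Or.inl (by omega))
        (fun h => by
          have := hGm _ _ (by omega) (by omega) h
          omega)
      exact ⟨s, fun _ => hs⟩
    · exact ⟨0, fun h => absurd h hc⟩
  choose t ht using hex
  refine ⟨t, ⟨?_, ?_, ?_⟩, ?_⟩
  · have h1 := (ht 0 le_rfl (m - 1)).1 (Or.inr (Or.inl (by omega)))
    have h2 : ¬ ((m : ℤ) < t 0) := fun h => by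
      have := hGm _ _ (by omega) (by omega) ((ht 0 le_rfl m).2 h)
      omega
    omega
  · have h1 := (ht (m + K) (by omega) (-1)).1 (Or.inl (by omega))
    have h2 : ¬ (0 < t (m + K)) := fun h => by
      have := hGm _ _ (by omega) (by omega) ((ht (m + K) (by omega) 0).2 h)
      omega
    omega
  · intro c hc hc'
    constructor
    · have h1 := (ht (c + 1) (by omega) (t (c + 1) - 1)).2 (by omega)
      have h2 := (ht c hc (t (c + 1) - 1)).1 (hG1 _ _ _ _ h1 (by omega) (by omega))
      omega
    · have h1 := (ht c hc (t c - 1)).2 (by omega)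
      have h2 := (ht (c + 1) (by omega) (t c - 2)).1 (hG1 _ _ _ _ h1 (by omega) (by omega))
      omega
  · ext p
    have hp := row_nn p
    have hy := yk_eq p
    rw [mem_Fof, ← ht _ (by omega), show rowZ p + ykappa m K p - m = colZ p by omega]
    constructor
    · intro h
      exact Or.inr (Or.inr ⟨p, h, rfl, rfl⟩)
    · rintro (h | h | ⟨q, hq, h1, h2⟩)
      · omega
      · omega
      · exact hF hq (by rw [le_iff_rc]; omega)

/-- Let `n = 2N` be even and `p = {N, N+1}` the unique orbit of `k ↦ n+1−k` not
satisfying the orthogonality condition.  Then the folded operator `S̃_p` on order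
filters of `Y_{m,n−m+1}` equals `S_N ∘ S_{N+1} ∘ S_N = S_{N+1} ∘ S_N ∘ S_{N+1}`.
Here `S̃_p` is the operator for the `J`-coloring `κ̃` at the orbit `p` (encoded by
its minimum `N`). -/
theorem Sop_fold_nonorth (N m : ℕ) (hN : 1 ≤ N) (hm : 1 ≤ m) (hmn : m ≤ 2 * N)
    (F : Set (YD m (2 * N - m + 1))) (hF : IsOrderFilter F) :
    Sop (ytkappa (2 * N) m (2 * N - m + 1)) (N : ℤ) F =
        Sop (ykappa m (2 * N - m + 1)) (N : ℤ)
          (Sop (ykappa m (2 * N - m + 1)) ((N : ℤ) + 1)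
            (Sop (ykappa m (2 * N - m + 1)) (N : ℤ) F)) ∧
      Sop (ytkappa (2 * N) m (2 * N - m + 1)) (N : ℤ) F =
        Sop (ykappa m (2 * N - m + 1)) ((N : ℤ) + 1)
          (Sop (ykappa m (2 * N - m + 1)) (N : ℤ)
            (Sop (ykappa m (2 * N - m + 1)) ((N : ℤ) + 1) F)) := by
  obtain ⟨t, ht, rfl⟩ := exists_valid F hF
  set K := 2 * N - m + 1 with hK
  have hmK : (m : ℤ) + K = 2 * N + 1 := by omega
  have v1 := ht.refl1 N (by omega) (by omega)
  have v2 := v1.refl1 (N + 1) (by omega) (by omega)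
  have w1 := ht.refl1 (N + 1) (by omega) (by omega)
  have w2 := w1.refl1 N (by omega) (by omega)
  rw [Sop_double ht (ytkappa (2 * N) m K) N (by omega) (by omega)
      (by intro p; simp only [ytkappa]; push_cast; omega),
    Sop_single ht N (by omega) (by omega), Sop_single v1 (N + 1) (by omega) (by omega),
    Sop_single v2 N (by omega) (by omega), Sop_single ht (N + 1) (by omega) (by omega),
    Sop_single w1 N (by omega) (by omega), Sop_single w2 (N + 1) (by omega) (by omega)]
  refine ⟨rfl, ?_⟩
  congr 1
  funext k
  simp only [refl1]
  rw [show (N : ℤ) + 1 + 1 = N + 2 by ring, show (N : ℤ) + 1 - 1 = N by ring]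
  split_ifs <;> omega
end

section
/- Fix integers n, m with 1 ≤ m ≤ (n+1)/2, let P := Y_{m,n−m+1} with I-coloring κ((i,j)) := j − i + m, and let Y be an order filter of P and k ∈ {1,…,n}. Then (k ∈ 𝓘(Y) and k+1 ∈ 𝓘(Y)) or (k ∉ 𝓘(Y) and k+1 ∉ 𝓘(Y)) if and only if S_k(Y) = Y. -/
/-- The length `𝐤_i` of row `i` of a subset `Y` of `Y_{m,N}`:
the number of cells of `Y` in row `i`. -/
noncomputable def rowLen (m N : ℕ) (Y : Set (YD m N)) (i : Fin m) : ℕ :=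
  Set.ncard {j : Fin N | (OrderDual.toDual i, OrderDual.toDual j) ∈ Y}

/-- `𝓘(Y) := {𝐤_i + m + 1 − i : 1 ≤ i ≤ m} ⊆ {1,…,n+1}` (here the row index `i`
is 0-indexed, so the element for row `i` is `𝐤_i + m − i`). -/
def ISet (m N : ℕ) (Y : Set (YD m N)) : Set ℤ :=
  {z : ℤ | ∃ i : Fin m, z = (rowLen m N Y i : ℤ) + m - (i : ℤ)}

lemma mem_iff_rowLen {m N : ℕ} {Y : Set (YD m N)} (hY : IsOrderFilter Y) (i : Fin m) (j : Fin N) :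
    ((OrderDual.toDual i, OrderDual.toDual j) : YD m N) ∈ Y ↔ (j : ℕ) < rowLen m N Y i := by
  unfold rowLen
  constructor
  · intro h
    have hs : (↑(Finset.Iic j) : Set (Fin N)) ⊆
        {j : Fin N | ((OrderDual.toDual i, OrderDual.toDual j) : YD m N) ∈ Y} := by
      intro a ha
      have ha' : a ≤ j := by simpa using ha
      exact hY h ⟨le_refl _, ha'⟩
    have := Set.ncard_le_ncard hs (Set.toFinite _)
    rw [Set.ncard_coe_finset, Fin.card_Iic] at this
    omega
  · intro h
    by_contra hn
    have hs : {j : Fin N | ((OrderDual.toDual i, OrderDual.toDual j) : YD m N) ∈ Y} ⊆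
        (↑(Finset.Iio j) : Set (Fin N)) := by
      intro a ha
      have : a < j := by
        by_contra hc
        exact hn (hY ha ⟨le_refl _, not_lt.mp hc⟩)
      simpa using this
    have := Set.ncard_le_ncard hs (Set.toFinite _)
    rw [Set.ncard_coe_finset, Fin.card_Iio] at this
    omega

lemma rowLen_le {m N : ℕ} (Y : Set (YD m N)) (i : Fin m) : rowLen m N Y i ≤ N := by
  unfold rowLen
  have := Set.ncard_le_ncard (Set.subset_univ
    {j : Fin N | ((OrderDual.toDual i, OrderDual.toDual j) : YD m N) ∈ Y}) (Set.toFinite _)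
  simpa [Set.ncard_univ] using this

lemma rowLen_anti {m N : ℕ} {Y : Set (YD m N)} (hY : IsOrderFilter Y) {i i' : Fin m}
    (h : i ≤ i') : rowLen m N Y i' ≤ rowLen m N Y i := by
  unfold rowLen
  refine Set.ncard_le_ncard ?_ (Set.toFinite _)
  intro j hj
  exact hY hj ⟨h, le_refl _⟩

lemma row_adj {m N : ℕ} {Y : Set (YD m N)} (hY : IsOrderFilter Y) {i i' : Fin m}
    (h : (rowLen m N Y i' : ℤ) - i' = rowLen m N Y i - i + 1) :
    (i' : ℕ) + 1 = i ∧ rowLen m N Y i' = rowLen m N Y i := by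
  have h1 : i' < i := by
    by_contra hc
    have := rowLen_anti hY (not_lt.mp hc)
    have h2 : (i : ℕ) ≤ i' := not_lt.mp hc
    omega
  have := rowLen_anti hY h1.le
  have h2 : (i' : ℕ) < i := h1
  omega

lemma Aop_subset {m N : ℕ} {Y : Set (YD m N)} (hY : IsOrderFilter Y) {k : ℤ}
    (h : k ∈ ISet m N Y → k + 1 ∈ ISet m N Y) : Aop (ykappa m N) k Y ⊆ Y := by
  rintro ⟨i, j⟩ ⟨F, ⟨hF, hFY⟩, hx⟩
  induction i using OrderDual.rec with | _ i
  induction j using OrderDual.rec with | _ j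
  by_contra hxY
  have hc : (j : ℤ) - i + m = k := hFY ⟨hx, hxY⟩
  have hL := (mem_iff_rowLen hY i j).not.mp hxY
  have hLj : rowLen m N Y i = j := by
    by_contra hne
    have hj0 : (j : ℕ) - 1 < N := by omega
    have h1 : ((OrderDual.toDual i, OrderDual.toDual ⟨(j : ℕ) - 1, hj0⟩) : YD m N) ∈ F :=
      hF hx ⟨le_refl _, show (⟨(j : ℕ) - 1, hj0⟩ : Fin N) ≤ j from Fin.le_def.mpr (by simp)⟩
    have h2 : ((OrderDual.toDual i, OrderDual.toDual ⟨(j : ℕ) - 1, hj0⟩) : YD m N) ∉ Y := by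
      rw [mem_iff_rowLen hY]; simp only; omega
    have h3 : (((j : ℕ) - 1 : ℕ) : ℤ) - i + m = k := hFY ⟨h1, h2⟩
    omega
  obtain ⟨i', hi'⟩ := h ⟨i, by omega⟩
  obtain ⟨h1, h2⟩ := row_adj hY (i := i) (i' := i') (by omega)
  have h3 : ((OrderDual.toDual i', OrderDual.toDual j) : YD m N) ∈ F :=
    hF hx ⟨show i' ≤ i from Fin.le_def.mpr (by omega), le_refl _⟩
  have h4 : ((OrderDual.toDual i', OrderDual.toDual j) : YD m N) ∉ Y := by
    rw [mem_iff_rowLen hY]; omega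
  have h5 : (j : ℤ) - i' + m = k := hFY ⟨h3, h4⟩
  omega

lemma subset_Rop {m N : ℕ} {Y : Set (YD m N)} (hY : IsOrderFilter Y) {k : ℤ}
    (h : k + 1 ∈ ISet m N Y → k ∈ ISet m N Y) : Y ⊆ Rop (ykappa m N) k Y := by
  rintro ⟨i, j⟩ hxY F ⟨hF, hFY⟩
  induction i using OrderDual.rec with | _ i
  induction j using OrderDual.rec with | _ j
  by_contra hx
  have hc : (j : ℤ) - i + m = k := hFY ⟨hxY, hx⟩
  have hL := (mem_iff_rowLen hY i j).mp hxY
  have hLN := rowLen_le Y i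
  have hLj : rowLen m N Y i = j + 1 := by
    by_contra hne
    have hj0 : (j : ℕ) + 1 < N := by omega
    have h1 : ((OrderDual.toDual i, OrderDual.toDual ⟨(j : ℕ) + 1, hj0⟩) : YD m N) ∉ F :=
      fun hh => hx (hF hh ⟨le_refl _,
        show j ≤ (⟨(j : ℕ) + 1, hj0⟩ : Fin N) from Fin.le_def.mpr (by simp)⟩)
    have h2 : ((OrderDual.toDual i, OrderDual.toDual ⟨(j : ℕ) + 1, hj0⟩) : YD m N) ∈ Y := by
      rw [mem_iff_rowLen hY]; simp only; omega
    have h3 : (((j : ℕ) + 1 : ℕ) : ℤ) - i + m = k := hFY ⟨h2, h1⟩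
    omega
  obtain ⟨i', hi'⟩ := h ⟨i, by omega⟩
  obtain ⟨h1, h2⟩ := row_adj hY (i := i') (i' := i) (by omega)
  have h3 : ((OrderDual.toDual i', OrderDual.toDual j) : YD m N) ∉ F :=
    fun hh => hx (hF hh ⟨show i ≤ i' from Fin.le_def.mpr (by omega), le_refl _⟩)
  have h4 : ((OrderDual.toDual i', OrderDual.toDual j) : YD m N) ∈ Y := by
    rw [mem_iff_rowLen hY]; omega
  have h5 : (j : ℤ) - i' + m = k := hFY ⟨h4, h3⟩
  omega

lemma exists_addable {m N : ℕ} {Y : Set (YD m N)} (hY : IsOrderFilter Y) {k : ℤ}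
    (hk : k + 1 ≤ N + m) (h : k ∈ ISet m N Y) (h' : k + 1 ∉ ISet m N Y) :
    ∃ x ∈ Aop (ykappa m N) k Y, x ∉ Y := by
  obtain ⟨i, hi⟩ := h
  have key : ∀ i' : Fin m, i' < i → rowLen m N Y i < rowLen m N Y i' := by
    intro i' hlt
    have hlt' : (i' : ℕ) < i := hlt
    have hb : (i : ℕ) - 1 < m := by omega
    have h1 := rowLen_anti hY (i := i') (i' := ⟨(i : ℕ) - 1, hb⟩) (Fin.le_def.mpr (by simp; omega))
    have h2 := rowLen_anti hY (i := ⟨(i : ℕ) - 1, hb⟩) (i' := i) (Fin.le_def.mpr (by simp))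
    by_contra hc
    exact h' ⟨⟨(i : ℕ) - 1, hb⟩, by simp only; omega⟩
  have hLN := rowLen_le Y i
  have hlt : rowLen m N Y i < N := by
    by_contra hc
    have hi0 : 0 < (i : ℕ) := by omega
    have h1 := key ⟨(i : ℕ) - 1, by omega⟩ (Fin.lt_def.mpr (by simp; omega))
    have h2 := rowLen_le Y ⟨(i : ℕ) - 1, by omega⟩
    omega
  set x : YD m N := (OrderDual.toDual i, OrderDual.toDual ⟨rowLen m N Y i, hlt⟩) with hxdef
  have hxY : x ∉ Y := by rw [hxdef, mem_iff_rowLen hY]; simp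
  refine ⟨x, ⟨insert x Y, ⟨?_, ?_⟩, Set.mem_insert _ _⟩, hxY⟩
  · rintro a ⟨p, q⟩ (rfl | ha) hab
    · induction p using OrderDual.rec with | _ p
      induction q using OrderDual.rec with | _ q
      have hp : p ≤ i := hab.1
      have hq : (q : ℕ) ≤ rowLen m N Y i := hab.2
      rcases hp.eq_or_lt with rfl | hp
      · rcases hq.eq_or_lt with hq | hq
        · left
          have : q = ⟨rowLen m N Y p, hlt⟩ := Fin.ext hq
          rw [this]
        · right; rw [mem_iff_rowLen hY]; exact hq
      · right; rw [mem_iff_rowLen hY]; exact lt_of_le_of_lt hq (key p hp)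
    · exact Or.inr (hY ha hab)
  · rintro a ⟨rfl | ha, ha'⟩
    · show ((rowLen m N Y i : ℕ) : ℤ) - i + m = k
      omega
    · exact absurd ha ha'

lemma exists_removable {m N : ℕ} {Y : Set (YD m N)} (hY : IsOrderFilter Y) {k : ℤ}
    (hk : 1 ≤ k) (h : k + 1 ∈ ISet m N Y) (h' : k ∉ ISet m N Y) :
    ∃ x ∈ Y, x ∉ Rop (ykappa m N) k Y := by
  obtain ⟨i, hi⟩ := h
  have key : ∀ i' : Fin m, i < i' → rowLen m N Y i' < rowLen m N Y i := by
    intro i' hlt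
    have hlt' : (i : ℕ) < i' := hlt
    have hb : (i : ℕ) + 1 < m := by omega
    have h1 := rowLen_anti hY (i' := i') (i := ⟨(i : ℕ) + 1, hb⟩) (Fin.le_def.mpr (by simp; omega))
    have h2 := rowLen_anti hY (i' := ⟨(i : ℕ) + 1, hb⟩) (i := i) (Fin.le_def.mpr (by simp))
    by_contra hc
    exact h' ⟨⟨(i : ℕ) + 1, hb⟩, by simp only; omega⟩
  have hLN := rowLen_le Y i
  have hpos : 0 < rowLen m N Y i := by
    by_contra hc
    have h1 := key ⟨(i : ℕ) + 1, by omega⟩ (Fin.lt_def.mpr (by simp))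
    omega
  have hlt : rowLen m N Y i - 1 < N := by omega
  set x : YD m N := (OrderDual.toDual i, OrderDual.toDual ⟨rowLen m N Y i - 1, hlt⟩) with hxdef
  have hxY : x ∈ Y := by rw [hxdef, mem_iff_rowLen hY]; simp only; omega
  refine ⟨x, hxY, fun hR => ?_⟩
  have := hR (Y \ {x}) ⟨?_, ?_⟩
  · exact this.2 rfl
  · rintro ⟨p, q⟩ b ⟨ha, hax⟩ hab
    refine ⟨hY ha hab, ?_⟩
    rintro rfl
    apply hax
    induction p using OrderDual.rec with | _ p
    induction q using OrderDual.rec with | _ q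
    have hp : i ≤ p := hab.1
    have hq : rowLen m N Y i - 1 ≤ (q : ℕ) := hab.2
    rw [mem_iff_rowLen hY] at ha
    rcases hp.eq_or_lt with rfl | hp
    · have : q = ⟨rowLen m N Y i - 1, hlt⟩ := Fin.ext (by simp only; omega)
      rw [this]; rfl
    · have := key p hp
      omega
  · rintro a ⟨ha, ha'⟩
    have : a = x := by
      by_contra hne
      exact ha' ⟨ha, hne⟩
    subst this
    show ((rowLen m N Y i - 1 : ℕ) : ℤ) - i + m = k
    omega

lemma Aop_filter {α C : Type*} [PartialOrder α] (κ : α → C) (c : C) (F : Set α) :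
    IsOrderFilter (Aop κ c F) := by
  rintro x y ⟨G, hG, hx⟩ hxy
  exact ⟨G, hG, hG.1 hx hxy⟩

lemma Rop_filter {α C : Type*} [PartialOrder α] (κ : α → C) (c : C) (F : Set α) :
    IsOrderFilter (Rop κ c F) := by
  intro x y hx hxy G hG
  exact hG.1 (hx G hG) hxy

lemma subset_Aop {α C : Type*} [PartialOrder α] (κ : α → C) (c : C) {F : Set α}
    (hF : IsOrderFilter F) : F ⊆ Aop κ c F :=
  fun _ hx => ⟨F, ⟨hF, by simp⟩, hx⟩

lemma Rop_subset {α C : Type*} [PartialOrder α] (κ : α → C) (c : C) {F : Set α}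
    (hF : IsOrderFilter F) : Rop κ c F ⊆ F :=
  fun _ hx => hx F ⟨hF, by simp⟩

lemma Sop_eq_Aop {α C : Type*} [PartialOrder α] (κ : α → C) (c : C) {F : Set α}
    (hF : IsOrderFilter F) (h : F ⊆ Rop κ c F) : Sop κ c F = Aop κ c F := by
  have h1 : Rop κ c F = F := (Rop_subset κ c hF).antisymm h
  have h2 : (Aop κ c F \ F) ∪ Rop κ c F = Aop κ c F := by
    rw [h1, Set.sdiff_union_of_subset (subset_Aop κ c hF)]
  unfold Sop
  rw [h2, if_pos (Aop_filter κ c F)]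

lemma Sop_eq_Rop {α C : Type*} [PartialOrder α] (κ : α → C) (c : C) {F : Set α}
    (h : Aop κ c F ⊆ F) : Sop κ c F = Rop κ c F := by
  have h2 : (Aop κ c F \ F) ∪ Rop κ c F = Rop κ c F := by
    rw [Set.sdiff_eq_empty.mpr h, Set.empty_union]
  unfold Sop
  rw [h2, if_pos (Rop_filter κ c F)]

/-- For an order filter `Y` of `Y_{m,n−m+1}` and `k ∈ {1,…,n}`:
(`k ∈ 𝓘(Y)` and `k+1 ∈ 𝓘(Y)`) or (`k ∉ 𝓘(Y)` and `k+1 ∉ 𝓘(Y)`)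
if and only if `S_k(Y) = Y`. -/
theorem ISet_iff_Sop_eq (n m : ℕ) (hm : 1 ≤ m) (hmn : 2 * m ≤ n + 1)
    (Y : Set (YD m (n - m + 1))) (hY : IsOrderFilter Y)
    (k : ℤ) (hk1 : 1 ≤ k) (hkn : k ≤ n) :
    ((k ∈ ISet m (n - m + 1) Y ∧ k + 1 ∈ ISet m (n - m + 1) Y) ∨
        (k ∉ ISet m (n - m + 1) Y ∧ k + 1 ∉ ISet m (n - m + 1) Y)) ↔
      Sop (ykappa m (n - m + 1)) k Y = Y := by
  have hb : k + 1 ≤ ((n - m + 1 : ℕ) : ℤ) + m := by omega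
  generalize n - m + 1 = N at *
  constructor
  · intro h
    have hA : Aop (ykappa m N) k Y ⊆ Y := Aop_subset hY (by tauto)
    have hR : Y ⊆ Rop (ykappa m N) k Y := subset_Rop hY (by tauto)
    rw [Sop_eq_Rop _ _ hA]
    exact (Rop_subset _ _ hY).antisymm hR
  · intro hS
    by_cases h1 : k ∈ ISet m N Y <;> by_cases h2 : k + 1 ∈ ISet m N Y
    · exact Or.inl ⟨h1, h2⟩
    · exfalso
      obtain ⟨x, hx, hxY⟩ := exists_addable hY hb h1 h2
      rw [Sop_eq_Aop _ _ hY (subset_Rop hY (by tauto))] at hS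
      exact hxY (hS ▸ hx)
    · exfalso
      obtain ⟨x, hxY, hx⟩ := exists_removable hY hk1 h2 h1
      rw [Sop_eq_Rop _ _ (Aop_subset hY (by tauto))] at hS
      rw [hS] at hx
      exact hx hxY
    · exact Or.inr ⟨h1, h2⟩
end
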